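/- Let R be a commutative ring with unit containing the field of rational numbers, V an R-module, S = Sym_R(V) with its standard bialgebra structure (Δ(x) = x⊗1 + 1⊗x for x ∈ V), δ' : V → S ⊗_R S an R-linear map, and δ : S → S ⊗_R S its extension determined by the (m,δ)-compatibility δ(ab) = δ(a)·Δ(b) + Δ(a)·δ(b) and δ(1) = 0. If δ' is co-skew symmetric and satisfies the co-Leibniz rule and the co-Jacobi identity (τ² + τ + id^{⊗3})∘(id⊗δ)∘δ' = 0 on V, then δ satisfies the co-Jacobi identity (τ² + τ + id^{⊗3})∘(id⊗δ)∘δ = 0 on all of S; consequently (S, δ) is a co-Poisson coalgebra. -/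

import Mathlib

/-!
Each of the three identities says that two linear maps `S → S ⊗ S` or `S → S ⊗ (S ⊗ S)` agree,
and both of them obey a Leibniz rule along the same algebra homomorphism: `Δ` for co-skew symmetry,
`Δ² = (id ⊗ Δ) ∘ Δ` for the other two. Such derivations are determined by their values on algebra
generators.

For co-Jacobi, put `N = τ² + τ + id` and `X = (id ⊗ δ) ∘ Δ`. The expansion of `(id ⊗ δ)(δ(ab))`
contains the cross terms `(id ⊗ Δ)(δ a) · X b + X a · (id ⊗ Δ)(δ b)`. The co-Leibniz rule and
co-skew symmetry give `(id ⊗ Δ) ∘ δ = τ ∘ X - τ² ∘ X`, so `N` kills the cross terms because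
`N ∘ τ = N`. Since `τ` fixes the image of `Δ²`, the map `N ∘ (id ⊗ δ) ∘ δ` is a derivation along
`Δ²`.
-/

set_option synthInstance.maxHeartbeats 1000000
set_option maxHeartbeats 1000000

noncomputable section

open MvPolynomial in
/-- The ideal of linearity relations presenting the symmetric algebra of the module `V`
as a quotient of the polynomial algebra on the set `V`. -/
def symIdeal (R V : Type) [CommRing R] [AddCommGroup V] [Module R V] :
    Ideal (MvPolynomial V R) :=
  Ideal.span
    ({p | ∃ v w : V, p = X (v + w) - X v - X w} ∪
     {p | ∃ (r : R) (v : V), p = X (r • v) - C r * X v})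

/-- The symmetric algebra `Sym_R(V)` of an `R`-module `V`. -/
abbrev SymmAlg (R V : Type) [CommRing R] [AddCommGroup V] [Module R V] : Type :=
  MvPolynomial V R ⧸ symIdeal R V

open MvPolynomial in
/-- The canonical linear inclusion `V → Sym_R(V)`. -/
def symι (R V : Type) [CommRing R] [AddCommGroup V] [Module R V] :
    V →ₗ[R] SymmAlg R V where
  toFun v := Ideal.Quotient.mk (symIdeal R V) (X v)
  map_add' v w := by
    rw [← map_add, Ideal.Quotient.eq]
    exact Ideal.subset_span (Or.inl ⟨v, w, by ring⟩)
  map_smul' r v := by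
    simp only [RingHom.id_apply]
    rw [show r • (Ideal.Quotient.mk (symIdeal R V)) (X v)
          = Ideal.Quotient.mk (symIdeal R V) (r • X v) from
        (map_smul (Ideal.Quotient.mkₐ R (symIdeal R V)) r (X v)).symm]
    rw [show r • (X v : MvPolynomial V R) = C r * X v from by rw [smul_eq_C_mul]]
    rw [Ideal.Quotient.eq]
    exact Ideal.subset_span (Or.inr ⟨r, v, by ring⟩)


open scoped TensorProduct

section TensorOps
variable (R S : Type) [CommRing R] [AddCommGroup S] [Module R S]

/-- The operator exchanging the first two factors of a threefold tensor product. -/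
def sigma12 : S ⊗[R] (S ⊗[R] S) →ₗ[R] S ⊗[R] (S ⊗[R] S) :=
  (TensorProduct.assoc R S S S).toLinearMap ∘ₗ
    (LinearMap.rTensor S (TensorProduct.comm R S S).toLinearMap) ∘ₗ
      (TensorProduct.assoc R S S S).symm.toLinearMap

/-- The operator exchanging the last two factors of a threefold tensor product. -/
def sigma23 : S ⊗[R] (S ⊗[R] S) →ₗ[R] S ⊗[R] (S ⊗[R] S) :=
  LinearMap.lTensor S (TensorProduct.comm R S S).toLinearMap

/-- The cyclic permutation `τ = σ₂₃ ∘ σ₁₂` of a threefold tensor product. -/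
def tau3 : S ⊗[R] (S ⊗[R] S) →ₗ[R] S ⊗[R] (S ⊗[R] S) :=
  sigma23 R S ∘ₗ sigma12 R S

variable {R S}

/-- `f ⊗ id : S ⊗ S → (S ⊗ S) ⊗ S ≃ S ⊗ (S ⊗ S)` for `f : S → S ⊗ S`. -/
def lmapTensorId (f : S →ₗ[R] S ⊗[R] S) : S ⊗[R] S →ₗ[R] S ⊗[R] (S ⊗[R] S) :=
  (TensorProduct.assoc R S S S).toLinearMap ∘ₗ LinearMap.rTensor S f

/-- `id ⊗ f : S ⊗ S → S ⊗ (S ⊗ S)` for `f : S → S ⊗ S`. -/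
def idTensorLmap (f : S →ₗ[R] S ⊗[R] S) : S ⊗[R] S →ₗ[R] S ⊗[R] (S ⊗[R] S) :=
  LinearMap.lTensor S f

end TensorOps

section DerivationAlong

variable {R A B C : Type*} [CommSemiring R] [Semiring A] [Algebra R A]

section Semiring

variable [Semiring B] [Algebra R B] [Semiring C] [Algebra R C]

/-- `d` is a derivation along the algebra homomorphism `D`, that is, a derivation into `B` viewed
as an `A`-bimodule through `D`. For `D = Δ` this is the `(m, δ)`-compatibility. A predicate is used
instead of `Derivation` because `B = A ⊗ A` already carries another `A`-module structure. -/
def IsDerivationAlong (D : A →ₐ[R] B) (d : A →ₗ[R] B) : Prop :=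
  ∀ a b, d (a * b) = d a * D b + D a * d b

namespace IsDerivationAlong

variable {D : A →ₐ[R] B} {d d' : A →ₗ[R] B}

theorem zero (D : A →ₐ[R] B) : IsDerivationAlong D 0 := fun a b => by
  simp only [LinearMap.zero_apply, zero_mul, mul_zero, add_zero]

theorem add (h : IsDerivationAlong D d) (h' : IsDerivationAlong D d') :
    IsDerivationAlong D (d + d') := fun a b => by
  simp only [LinearMap.add_apply, h a b, h' a b, add_mul, mul_add]
  abel

theorem comp_algHom (h : IsDerivationAlong D d) (f : C →ₐ[R] A) :
    IsDerivationAlong (D.comp f) (d ∘ₗ f.toLinearMap) := fun a b => by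
  simpa using h (f a) (f b)

theorem map_comp (h : IsDerivationAlong D d) {D' : A →ₐ[R] C} {f : B →ₗ[R] C}
    (hmul : ∀ x y, f (x * y) = f x * f y) (hf : ∀ a, f (D a) = D' a) :
    IsDerivationAlong D' (f ∘ₗ d) := fun a b => by
  simp only [LinearMap.comp_apply, h a b, map_add, hmul, hf]

theorem lTensor (h : IsDerivationAlong D d) :
    IsDerivationAlong (Algebra.TensorProduct.map (AlgHom.id R C) D) (d.lTensor C) := by
  intro x y
  induction x with
  | zero => simp
  | add x₁ x₂ h₁ h₂ => simp only [add_mul, map_add, h₁, h₂]; abel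
  | tmul c a =>
    induction y with
    | zero => simp
    | add y₁ y₂ h₁ h₂ => simp only [mul_add, map_add, h₁, h₂]; abel
    | tmul c' a' => simp [h a a', TensorProduct.tmul_add]

end IsDerivationAlong

end Semiring

namespace IsDerivationAlong

variable [Ring B] [Algebra R B] {D : A →ₐ[R] B} {d d' : A →ₗ[R] B}

theorem neg (h : IsDerivationAlong D d) : IsDerivationAlong D (-d) := fun a b => by
  simp only [LinearMap.neg_apply, h a b, neg_mul, mul_neg, neg_add]

theorem map_one_eq_zero (h : IsDerivationAlong D d) : d 1 = 0 := by
  simpa using h 1 1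

theorem map_algebraMap (h : IsDerivationAlong D d) (r : R) : d (algebraMap R A r) = 0 := by
  rw [Algebra.algebraMap_eq_smul_one, map_smul, h.map_one_eq_zero, smul_zero]

theorem ext_of_adjoin_eq_top {s : Set A} (hs : Algebra.adjoin R s = ⊤)
    (h : IsDerivationAlong D d) (h' : IsDerivationAlong D d') (heq : Set.EqOn d d' s) :
    d = d' := by
  ext a
  have ha : a ∈ Algebra.adjoin R s := hs ▸ Algebra.mem_top
  induction ha using Algebra.adjoin_induction with
  | mem x hx => exact heq hx
  | algebraMap r => rw [h.map_algebraMap, h'.map_algebraMap]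
  | add x y _ _ hx hy => rw [map_add, map_add, hx, hy]
  | mul x y _ _ hx hy => rw [h, h', hx, hy]

end IsDerivationAlong

end DerivationAlong

section TensorOperators

variable {R S : Type} [CommRing R]

section Module

variable [AddCommGroup S] [Module R S]

lemma sigma12_tmul (a b c : S) :
    sigma12 R S (a ⊗ₜ[R] (b ⊗ₜ[R] c)) = b ⊗ₜ[R] (a ⊗ₜ[R] c) := by
  simp [sigma12]

lemma sigma23_tmul (a b c : S) :
    sigma23 R S (a ⊗ₜ[R] (b ⊗ₜ[R] c)) = a ⊗ₜ[R] (c ⊗ₜ[R] b) := by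
  simp [sigma23]

lemma tau3_tmul (a b c : S) :
    tau3 R S (a ⊗ₜ[R] (b ⊗ₜ[R] c)) = b ⊗ₜ[R] (c ⊗ₜ[R] a) := by
  simp [tau3, sigma12_tmul, sigma23_tmul]

lemma tau3_tau3 (x : S ⊗[R] (S ⊗[R] S)) :
    tau3 R S (tau3 R S x) = sigma12 R S (sigma23 R S x) := by
  have h : tau3 R S ∘ₗ tau3 R S = sigma12 R S ∘ₗ sigma23 R S := by
    ext a b c
    simp [tau3_tmul, sigma12_tmul, sigma23_tmul]
  exact LinearMap.congr_fun h x

lemma tau3_tau3_tau3 (x : S ⊗[R] (S ⊗[R] S)) : tau3 R S (tau3 R S (tau3 R S x)) = x := by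
  have h : tau3 R S ∘ₗ tau3 R S ∘ₗ tau3 R S = LinearMap.id := by
    ext a b c
    simp [tau3_tmul]
  exact LinearMap.congr_fun h x

lemma sigma12_lmapTensorId (f : S →ₗ[R] S ⊗[R] S) (x : S ⊗[R] S) :
    sigma12 R S (lmapTensorId f x)
      = lmapTensorId ((TensorProduct.comm R S S).toLinearMap ∘ₗ f) x := by
  simp [sigma12, lmapTensorId, LinearMap.rTensor_comp]

lemma sigma23_idTensorLmap (f : S →ₗ[R] S ⊗[R] S) (x : S ⊗[R] S) :
    sigma23 R S (idTensorLmap f x)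
      = idTensorLmap ((TensorProduct.comm R S S).toLinearMap ∘ₗ f) x := by
  simp [sigma23, idTensorLmap, LinearMap.lTensor_comp]

lemma tau3_tmul_left (a : S) (z : S ⊗[R] S) :
    tau3 R S (a ⊗ₜ[R] z) = TensorProduct.assoc R S S S (z ⊗ₜ[R] a) := by
  induction z with
  | zero => simp
  | add x y hx hy => simp only [TensorProduct.tmul_add, TensorProduct.add_tmul, map_add, hx, hy]
  | tmul b c => simp [tau3_tmul]

lemma tau3_idTensorLmap (f : S →ₗ[R] S ⊗[R] S) (x : S ⊗[R] S) :
    tau3 R S (idTensorLmap f x) = lmapTensorId f (TensorProduct.comm R S S x) := by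
  induction x with
  | zero => simp
  | add x y hx hy => simp only [map_add, hx, hy]
  | tmul a b => simp [idTensorLmap, lmapTensorId, tau3_tmul_left]

variable (R S) in
/-- The operator `τ² + τ + id` of the co-Jacobi identity. -/
def cyclicSum : S ⊗[R] (S ⊗[R] S) →ₗ[R] S ⊗[R] (S ⊗[R] S) :=
  tau3 R S ∘ₗ tau3 R S + tau3 R S + LinearMap.id

lemma cyclicSum_apply (x : S ⊗[R] (S ⊗[R] S)) :
    cyclicSum R S x = tau3 R S (tau3 R S x) + tau3 R S x + x :=
  rfl

lemma cyclicSum_tau3 (x : S ⊗[R] (S ⊗[R] S)) :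
    cyclicSum R S (tau3 R S x) = cyclicSum R S x := by
  rw [cyclicSum_apply, cyclicSum_apply, tau3_tau3_tau3]
  abel

end Module

section Algebra

variable [Ring S] [Algebra R S]

lemma sigma12_mul (x y : S ⊗[R] (S ⊗[R] S)) :
    sigma12 R S (x * y) = sigma12 R S x * sigma12 R S y := by
  have h : sigma12 R S = (Algebra.TensorProduct.leftComm R S S S).toLinearMap := by
    ext a b c
    simp [sigma12_tmul]
  rw [h]
  exact map_mul (Algebra.TensorProduct.leftComm R S S S) x y

lemma sigma23_mul (x y : S ⊗[R] (S ⊗[R] S)) :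
    sigma23 R S (x * y) = sigma23 R S x * sigma23 R S y :=
  map_mul (Algebra.TensorProduct.map (AlgHom.id R S)
    (Algebra.TensorProduct.comm R S S).toAlgHom) x y

lemma tau3_mul (x y : S ⊗[R] (S ⊗[R] S)) :
    tau3 R S (x * y) = tau3 R S x * tau3 R S y := by
  simp only [tau3, LinearMap.comp_apply, sigma12_mul, sigma23_mul]

lemma cyclicSum_mul_of_tau3_eq {y : S ⊗[R] (S ⊗[R] S)} (hy : tau3 R S y = y)
    (x : S ⊗[R] (S ⊗[R] S)) : cyclicSum R S (x * y) = cyclicSum R S x * y := by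
  simp only [cyclicSum_apply, tau3_mul, hy, add_mul]

lemma cyclicSum_mul_of_tau3_eq_left {x : S ⊗[R] (S ⊗[R] S)} (hx : tau3 R S x = x)
    (y : S ⊗[R] (S ⊗[R] S)) : cyclicSum R S (x * y) = x * cyclicSum R S y := by
  simp only [cyclicSum_apply, tau3_mul, hx, mul_add]

lemma cyclicSum_tau3_sub_mul_add (x y : S ⊗[R] (S ⊗[R] S)) :
    cyclicSum R S ((tau3 R S x - tau3 R S (tau3 R S x)) * y
      + x * (tau3 R S y - tau3 R S (tau3 R S y))) = 0 := by
  have hxy : cyclicSum R S (tau3 R S x * y) = cyclicSum R S (x * tau3 R S (tau3 R S y)) := by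
    rw [← cyclicSum_tau3, ← cyclicSum_tau3, tau3_mul, tau3_mul, tau3_tau3_tau3]
  have hyx : cyclicSum R S (x * tau3 R S y) = cyclicSum R S (tau3 R S (tau3 R S x) * y) := by
    rw [← cyclicSum_tau3, ← cyclicSum_tau3, tau3_mul, tau3_mul, tau3_tau3_tau3]
  simp only [sub_mul, mul_sub, map_add, map_sub, hxy, hyx]
  abel

end Algebra

end TensorOperators

section Coalgebra

variable {R S : Type} [CommRing R] [Ring S] [Algebra R S] {D : S →ₐ[R] S ⊗[R] S}

theorem comm_apply_of_primitive {s : Set S} (hs : Algebra.adjoin R s = ⊤)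
    (hD : ∀ x ∈ s, D x = x ⊗ₜ[R] 1 + 1 ⊗ₜ[R] x) (a : S) :
    TensorProduct.comm R S S (D a) = D a := by
  have h : (Algebra.TensorProduct.comm R S S).toAlgHom.comp D = D :=
    AlgHom.ext_of_adjoin_eq_top hs fun x hx => by simp [hD x hx, add_comm]
  exact DFunLike.congr_fun h a

theorem coassoc_apply_of_primitive {s : Set S} (hs : Algebra.adjoin R s = ⊤)
    (hD : ∀ x ∈ s, D x = x ⊗ₜ[R] 1 + 1 ⊗ₜ[R] x) (a : S) :
    lmapTensorId D.toLinearMap (D a) = idTensorLmap D.toLinearMap (D a) := by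
  have h : (Algebra.TensorProduct.assoc R R R S S S).toAlgHom.comp
      ((Algebra.TensorProduct.map D (AlgHom.id R S)).comp D)
        = (Algebra.TensorProduct.map (AlgHom.id R S) D).comp D :=
    AlgHom.ext_of_adjoin_eq_top hs fun x hx => by
      simp [hD x hx, Algebra.TensorProduct.one_def, TensorProduct.tmul_add,
        TensorProduct.add_tmul, add_assoc]
  exact DFunLike.congr_fun h a

variable (D) in
/-- The iterated comultiplication `Δ² = (id ⊗ Δ) ∘ Δ`. -/
def iteratedComul : S →ₐ[R] S ⊗[R] (S ⊗[R] S) :=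
  (Algebra.TensorProduct.map (AlgHom.id R S) D).comp D

lemma idTensorLmap_comul (a : S) : idTensorLmap D.toLinearMap (D a) = iteratedComul D a :=
  rfl

lemma tau3_idTensorLmap_comul (hcocomm : ∀ a, TensorProduct.comm R S S (D a) = D a)
    (f : S →ₗ[R] S ⊗[R] S) (a : S) :
    tau3 R S (idTensorLmap f (D a)) = lmapTensorId f (D a) := by
  rw [tau3_idTensorLmap, hcocomm]

lemma sigma12_iteratedComul (hcocomm : ∀ a, TensorProduct.comm R S S (D a) = D a)
    (hcoassoc : ∀ a, lmapTensorId D.toLinearMap (D a) = idTensorLmap D.toLinearMap (D a))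
    (a : S) :
    sigma12 R S (iteratedComul D a) = iteratedComul D a := by
  have h : (TensorProduct.comm R S S).toLinearMap ∘ₗ D.toLinearMap = D.toLinearMap :=
    LinearMap.ext hcocomm
  rw [← idTensorLmap_comul, ← hcoassoc, sigma12_lmapTensorId, h]

lemma tau3_iteratedComul (hcocomm : ∀ a, TensorProduct.comm R S S (D a) = D a)
    (hcoassoc : ∀ a, lmapTensorId D.toLinearMap (D a) = idTensorLmap D.toLinearMap (D a))
    (a : S) : tau3 R S (iteratedComul D a) = iteratedComul D a := by
  rw [← idTensorLmap_comul, tau3_idTensorLmap_comul hcocomm, hcoassoc]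

variable {d : S →ₗ[R] S ⊗[R] S}

namespace IsDerivationAlong

lemma idTensorLmap_mul (hd : IsDerivationAlong D d) (x y : S ⊗[R] S) :
    idTensorLmap d (x * y) = idTensorLmap d x * idTensorLmap D.toLinearMap y
      + idTensorLmap D.toLinearMap x * idTensorLmap d y :=
  hd.lTensor x y

lemma idTensorLmap_comp_comul (hd : IsDerivationAlong D d) :
    IsDerivationAlong (iteratedComul D) (idTensorLmap d ∘ₗ D.toLinearMap) :=
  hd.lTensor.comp_algHom D

lemma idTensorLmap_comul_comp (hd : IsDerivationAlong D d) :
    IsDerivationAlong (iteratedComul D) (idTensorLmap D.toLinearMap ∘ₗ d) :=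
  hd.map_comp (map_mul (Algebra.TensorProduct.map (AlgHom.id R S) D)) idTensorLmap_comul

theorem comm_comp_eq_neg {s : Set S} (hs : Algebra.adjoin R s = ⊤)
    (hcocomm : ∀ a, TensorProduct.comm R S S (D a) = D a) (hd : IsDerivationAlong D d)
    (hskew : ∀ x ∈ s, TensorProduct.comm R S S (d x) = -d x) :
    (TensorProduct.comm R S S).toLinearMap ∘ₗ d = -d :=
  ext_of_adjoin_eq_top hs
    (hd.map_comp (map_mul (Algebra.TensorProduct.comm R S S)) hcocomm) hd.neg hskew

theorem coLeibniz {s : Set S} (hs : Algebra.adjoin R s = ⊤)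
    (hcocomm : ∀ a, TensorProduct.comm R S S (D a) = D a)
    (hcoassoc : ∀ a, lmapTensorId D.toLinearMap (D a) = idTensorLmap D.toLinearMap (D a))
    (hd : IsDerivationAlong D d)
    (hleib : ∀ x ∈ s, idTensorLmap D.toLinearMap (d x)
      = lmapTensorId d (D x) + sigma12 R S (idTensorLmap d (D x))) (a : S) :
    idTensorLmap D.toLinearMap (d a)
      = lmapTensorId d (D a) + sigma12 R S (idTensorLmap d (D a)) := by
  have hX := hd.idTensorLmap_comp_comul
  have hτX := hX.map_comp tau3_mul (tau3_iteratedComul hcocomm hcoassoc)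
  have hσX := hX.map_comp sigma12_mul (sigma12_iteratedComul hcocomm hcoassoc)
  simp only [← tau3_idTensorLmap_comul hcocomm] at hleib ⊢
  exact LinearMap.congr_fun
    (ext_of_adjoin_eq_top hs hd.idTensorLmap_comul_comp (hτX.add hσX) hleib) a

end IsDerivationAlong

lemma idTensorLmap_comul_eq_tau3_sub (hcocomm : ∀ a, TensorProduct.comm R S S (D a) = D a)
    (hskew : (TensorProduct.comm R S S).toLinearMap ∘ₗ d = -d) {a : S}
    (hleib : idTensorLmap D.toLinearMap (d a)
      = lmapTensorId d (D a) + sigma12 R S (idTensorLmap d (D a))) :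
    idTensorLmap D.toLinearMap (d a)
      = tau3 R S (idTensorLmap d (D a)) - tau3 R S (tau3 R S (idTensorLmap d (D a))) := by
  have hσ : sigma23 R S (idTensorLmap d (D a)) = -idTensorLmap d (D a) := by
    rw [sigma23_idTensorLmap, hskew, idTensorLmap, idTensorLmap, LinearMap.lTensor_neg,
      LinearMap.neg_apply]
  rw [hleib, tau3_tau3, hσ, map_neg, sub_neg_eq_add, tau3_idTensorLmap_comul hcocomm]

theorem IsDerivationAlong.cyclicSum_comp
    (hτ : ∀ a, tau3 R S (iteratedComul D a) = iteratedComul D a) (hd : IsDerivationAlong D d)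
    (hleib : ∀ a, idTensorLmap D.toLinearMap (d a)
      = tau3 R S (idTensorLmap d (D a)) - tau3 R S (tau3 R S (idTensorLmap d (D a)))) :
    IsDerivationAlong (iteratedComul D) (cyclicSum R S ∘ₗ idTensorLmap d ∘ₗ d) := by
  intro a b
  have hexpand : idTensorLmap d (d (a * b))
      = idTensorLmap d (d a) * iteratedComul D b + iteratedComul D a * idTensorLmap d (d b)
        + (idTensorLmap D.toLinearMap (d a) * idTensorLmap d (D b)
          + idTensorLmap d (D a) * idTensorLmap D.toLinearMap (d b)) := by
    rw [hd, map_add, hd.idTensorLmap_mul, hd.idTensorLmap_mul, idTensorLmap_comul,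
      idTensorLmap_comul]
    abel
  simp only [LinearMap.comp_apply]
  rw [hexpand, hleib, hleib, map_add, cyclicSum_tau3_sub_mul_add, add_zero, map_add,
    cyclicSum_mul_of_tau3_eq (hτ b), cyclicSum_mul_of_tau3_eq_left (hτ a)]

theorem statement7_general {s : Set S} (hs : Algebra.adjoin R s = ⊤)
    (hcocomm : ∀ a, TensorProduct.comm R S S (D a) = D a)
    (hcoassoc : ∀ a, lmapTensorId D.toLinearMap (D a) = idTensorLmap D.toLinearMap (D a))
    (hd : IsDerivationAlong D d)
    (hskew : ∀ x ∈ s, TensorProduct.comm R S S (d x) = -d x)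
    (hleib : ∀ x ∈ s, idTensorLmap D.toLinearMap (d x)
      = lmapTensorId d (D x) + sigma12 R S (idTensorLmap d (D x)))
    (hjac : ∀ x ∈ s, tau3 R S (tau3 R S (idTensorLmap d (d x)))
      + tau3 R S (idTensorLmap d (d x)) + idTensorLmap d (d x) = 0) :
    (∀ a, tau3 R S (tau3 R S (idTensorLmap d (d a)))
      + tau3 R S (idTensorLmap d (d a)) + idTensorLmap d (d a) = 0) ∧
    (∀ a, TensorProduct.comm R S S (d a) = -d a) ∧
    (∀ a, idTensorLmap D.toLinearMap (d a)
      = lmapTensorId d (D a) + sigma12 R S (idTensorLmap d (D a))) := by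
  have skew := hd.comm_comp_eq_neg hs hcocomm hskew
  have leib := hd.coLeibniz hs hcocomm hcoassoc hleib
  have jac : cyclicSum R S ∘ₗ idTensorLmap d ∘ₗ d = 0 :=
    (hd.cyclicSum_comp (tau3_iteratedComul hcocomm hcoassoc) fun a =>
      idTensorLmap_comul_eq_tau3_sub hcocomm skew (leib a)).ext_of_adjoin_eq_top hs
        (IsDerivationAlong.zero _) hjac
  exact ⟨LinearMap.congr_fun jac, LinearMap.congr_fun skew, leib⟩

end Coalgebra

lemma adjoin_range_symι (R V : Type) [CommRing R] [AddCommGroup V] [Module R V] :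
    Algebra.adjoin R (Set.range (symι R V)) = ⊤ := by
  have h : Set.range (symι R V)
      = Ideal.Quotient.mkₐ R (symIdeal R V) '' Set.range (MvPolynomial.X (R := R)) := by
    rw [← Set.range_comp]
    rfl
  rw [h, ← AlgHom.map_adjoin, MvPolynomial.adjoin_range_X, Algebra.map_top,
    AlgHom.range_eq_top]
  exact Ideal.Quotient.mkₐ_surjective R _

/-- **Lemma 4.1(3).** Let `S = Sym_R(V)` with its standard bialgebra structure, and let
`δ : S → S ⊗ S` be the extension of a linear map `δ' : V → S ⊗ S` determined by the
`(m,δ)`-compatibility and `δ(1) = 0`.  If `δ'` is co-skew symmetric and satisfies the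
co-Leibniz rule and the co-Jacobi identity `(τ² + τ + id)∘(id⊗δ)∘δ' = 0` on `V`, then
`δ` satisfies the co-Jacobi identity on all of `S`; consequently `(S, δ)` is a
co-Poisson coalgebra. -/
theorem statement7 {R : Type} [CommRing R] [Algebra ℚ R]
    {V : Type} [AddCommGroup V] [Module R V]
    (delta' : V →ₗ[R] SymmAlg R V ⊗[R] SymmAlg R V)
    (Delta : SymmAlg R V →ₐ[R] SymmAlg R V ⊗[R] SymmAlg R V)
    (hDelta : ∀ x : V, Delta (symι R V x) = symι R V x ⊗ₜ[R] 1 + 1 ⊗ₜ[R] symι R V x)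
    (delta : SymmAlg R V →ₗ[R] SymmAlg R V ⊗[R] SymmAlg R V)
    (hext : ∀ x : V, delta (symι R V x) = delta' x)
    (hone : delta 1 = 0)
    (hcompat : ∀ a b : SymmAlg R V, delta (a * b) = delta a * Delta b + Delta a * delta b)
    (hcoskew' : ∀ x : V,
      TensorProduct.comm R (SymmAlg R V) (SymmAlg R V) (delta' x) = - delta' x)
    (hcoleib' : ∀ x : V,
      idTensorLmap Delta.toLinearMap (delta (symι R V x))
        = lmapTensorId delta (Delta (symι R V x))
          + sigma12 R (SymmAlg R V) (idTensorLmap delta (Delta (symι R V x))))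
    (hcojacobi' : ∀ x : V,
      tau3 R (SymmAlg R V) (tau3 R (SymmAlg R V) (idTensorLmap delta (delta' x)))
        + tau3 R (SymmAlg R V) (idTensorLmap delta (delta' x))
        + idTensorLmap delta (delta' x) = 0) :
    (∀ a : SymmAlg R V,
      tau3 R (SymmAlg R V) (tau3 R (SymmAlg R V) (idTensorLmap delta (delta a)))
        + tau3 R (SymmAlg R V) (idTensorLmap delta (delta a))
        + idTensorLmap delta (delta a) = 0) ∧
    -- consequently `(S, δ)` is a co-Poisson coalgebra:
    (∀ a : SymmAlg R V,
      TensorProduct.comm R (SymmAlg R V) (SymmAlg R V) (delta a) = - delta a) ∧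
    (∀ a : SymmAlg R V,
      idTensorLmap Delta.toLinearMap (delta a)
        = lmapTensorId delta (Delta a)
          + sigma12 R (SymmAlg R V) (idTensorLmap delta (Delta a))) := by
  obtain rfl : delta' = delta ∘ₗ symι R V := LinearMap.ext fun x => (hext x).symm
  have hprim : ∀ a ∈ Set.range (symι R V), Delta a = a ⊗ₜ[R] 1 + 1 ⊗ₜ[R] a :=
    Set.forall_mem_range.2 hDelta
  exact statement7_general (adjoin_range_symι R V)
    (comm_apply_of_primitive (adjoin_range_symι R V) hprim)
    (coassoc_apply_of_primitive (adjoin_range_symι R V) hprim) hcompat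
    (Set.forall_mem_range.2 hcoskew') (Set.forall_mem_range.2 hcoleib')
    (Set.forall_mem_range.2 hcojacobi')

end
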